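/- Let R be a commutative ring and M an invertible R-module, i.e., a finitely generated projective R-module whose localization at every prime ideal of R is free of rank 1. Let f, g ∈ M be two elements that generate M, i.e., the R-submodule of M spanned by {f, g} is all of M. Then the cokernel of the R-linear map Hom_R(M, R) → Hom_R(M, R) × R × R sending φ to (0, φ f, φ g) is isomorphic, as an R-module, to Hom_R(M, R) × M. -/

import Mathlib

/-- An *invertible module* over a commutative ring `R`: a finitely generated projective
`R`-module whose localization at every prime ideal of `R` is free of rank 1. -/
def IsInvertibleModule (R : Type*) [CommRing R] (M : Type*) [AddCommGroup M]
    [Module R M] : Prop :=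
  Module.Finite R M ∧ Module.Projective R M ∧
    ∀ (p : Ideal R) [p.IsPrime],
      Module.Free (Localization.AtPrime p) (LocalizedModule p.primeCompl M) ∧
      Module.finrank (Localization.AtPrime p) (LocalizedModule p.primeCompl M) = 1

/-- The `R`-linear map `Hom_R(M, R) → Hom_R(M, R) × R × R`, `φ ↦ (0, φ f, φ g)`. -/
def zeroEvalMap (R : Type*) [CommRing R] (M : Type*) [AddCommGroup M] [Module R M]
    (f g : M) : (M →ₗ[R] R) →ₗ[R] (M →ₗ[R] R) × R × R :=
  LinearMap.prod (0 : (M →ₗ[R] R) →ₗ[R] (M →ₗ[R] R))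
    (LinearMap.prod (LinearMap.applyₗ f) (LinearMap.applyₗ g))

open Module in
/-- In a module free of rank one, `φ x • y` is symmetric in `x` and `y`. -/
theorem Module.dual_apply_smul_comm_of_finrank_eq_one {R M : Type*} [CommRing R] [Nontrivial R]
    [AddCommGroup M] [Module R M] [Module.Free R M] (h : finrank R M = 1)
    (φ : M →ₗ[R] R) (x y : M) : φ x • y = φ y • x := by
  let b := basisUnique Unit h
  have hb (z : M) : z = b.repr z () • b () := by
    simpa using (b.sum_repr z).symm
  rw [hb x, hb y]
  simp only [map_smul, smul_eq_mul, smul_smul]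
  congr 1
  ring

namespace IsInvertibleModule

variable {R M : Type*} [CommRing R] [AddCommGroup M] [Module R M]

/-- On an invertible module, `φ x • y` is symmetric in `x` and `y`. -/
theorem dual_apply_smul_comm (hM : IsInvertibleModule R M) (φ : M →ₗ[R] R) (x y : M) :
    φ x • y = φ y • x := by
  refine Module.eq_of_localization_maximal (R := R) (fun P _ => LocalizedModule P.primeCompl M)
    (fun P _ => LocalizedModule.mkLinearMap P.primeCompl M) _ _ fun P _ => ?_
  obtain ⟨hfree, hrank⟩ := hM.2.2 P
  let ι := LocalizedModule.mkLinearMap P.primeCompl M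
  let ψ := IsLocalizedModule.mapExtendScalars P.primeCompl ι
    (Algebra.linearMap R (Localization.AtPrime P)) (Localization.AtPrime P) φ
  have hψ (z : M) : ψ (ι z) = algebraMap R (Localization.AtPrime P) (φ z) :=
    IsLocalizedModule.map_apply P.primeCompl ι (Algebra.linearMap R _) φ z
  have h := Module.dual_apply_smul_comm_of_finrank_eq_one hrank ψ (ι x) (ι y)
  rw [hψ, hψ, algebraMap_smul, algebraMap_smul] at h
  rw [map_smul, map_smul]
  exact h

/-- An invertible module is faithful. -/
theorem faithfulSMul (hM : IsInvertibleModule R M) : FaithfulSMul R M where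
  eq_of_smul_eq_smul {r s} hrs := by
    refine Module.eq_of_localization_maximal (R := R) (fun P _ => Localization.AtPrime P)
      (fun P _ => Algebra.linearMap R (Localization.AtPrime P)) _ _ fun P _ => ?_
    obtain ⟨hfree, hrank⟩ := hM.2.2 P
    have : Nontrivial (LocalizedModule P.primeCompl M) :=
      Module.nontrivial_of_finrank_pos (R := Localization.AtPrime P) (by omega)
    refine FaithfulSMul.eq_of_smul_eq_smul (α := LocalizedModule P.primeCompl M) fun z => ?_
    induction z using LocalizedModule.induction_on with
    | h m t =>
      simp only [Algebra.linearMap_apply, algebraMap_smul, LocalizedModule.smul'_mk, hrs]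

/-- If `f` and `g` generate an invertible module `M`, every relation `a • g = b • f` is given by
evaluating a linear form on `M` at `f` and `g`. -/
theorem exists_dual_apply_eq (hM : IsInvertibleModule R M) {f g : M}
    (hfg : Submodule.span R ({f, g} : Set M) = ⊤) {a b : R} (hab : a • g = b • f) :
    ∃ φ : M →ₗ[R] R, φ f = a ∧ φ g = b := by
  have := hM.2.1
  have := hM.faithfulSMul
  let q : R × R →ₗ[R] M :=
    (LinearMap.toSpanSingleton R M f).coprod (LinearMap.toSpanSingleton R M g)
  have hq : Function.Surjective q := fun m => by
    obtain ⟨c, d, h⟩ := Submodule.mem_span_pair.mp (hfg ▸ Submodule.mem_top (x := m))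
    exact ⟨(c, d), by simpa [q] using h⟩
  obtain ⟨s, hs⟩ := Module.projective_lifting_property q LinearMap.id hq
  let α := LinearMap.fst R R R ∘ₗ s
  let β := LinearMap.snd R R R ∘ₗ s
  have hαβ (m : M) : α m • f + β m • g = m := by
    simpa [q, α, β] using LinearMap.congr_fun hs m
  have htrace : α f + β g = 1 := by
    refine FaithfulSMul.eq_of_smul_eq_smul (α := M) fun m => ?_
    rw [add_smul, hM.dual_apply_smul_comm α, hM.dual_apply_smul_comm β, hαβ, one_smul]
  have hα : a * α g = b * α f := by simpa using congrArg α hab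
  have hβ : a * β g = b * β f := by simpa using congrArg β hab
  refine ⟨a • α + b • β, ?_, ?_⟩ <;>
    simp only [LinearMap.add_apply, LinearMap.smul_apply, smul_eq_mul]
  · linear_combination a * htrace - hβ
  · linear_combination b * htrace + hα

end IsInvertibleModule

/-- Let `R` be a commutative ring, `M` an invertible `R`-module, and
`f, g ∈ M` generators of `M`. Then the cokernel of the `R`-linear map
`Hom_R(M,R) → Hom_R(M,R) × R × R`, `φ ↦ (0, φ f, φ g)`, is isomorphic as an `R`-module
to `Hom_R(M,R) × M`. -/
theorem cokernel_zeroEvalMap (R : Type*) [CommRing R] (M : Type*) [AddCommGroup M]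
    [Module R M] (hM : IsInvertibleModule R M) (f g : M)
    (hfg : Submodule.span R ({f, g} : Set M) = ⊤) :
    Nonempty ((((M →ₗ[R] R) × R × R) ⧸ LinearMap.range (zeroEvalMap R M f g))
      ≃ₗ[R] (M →ₗ[R] R) × M) := by
  let q : R × R →ₗ[R] M :=
    (LinearMap.toSpanSingleton R M g).coprod (-LinearMap.toSpanSingleton R M f)
  have hq_apply (a b : R) : q (a, b) = a • g - b • f := by simp [q, sub_eq_add_neg]
  let Q : (M →ₗ[R] R) × R × R →ₗ[R] (M →ₗ[R] R) × M := LinearMap.id.prodMap q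
  have hQ : Function.Surjective Q := by
    rintro ⟨φ, m⟩
    obtain ⟨c, d, h⟩ := Submodule.mem_span_pair.mp (hfg ▸ Submodule.mem_top (x := m))
    refine ⟨(φ, d, -c), Prod.ext rfl ?_⟩
    change q (d, -c) = m
    rw [hq_apply, ← h]
    module
  have hker : LinearMap.range (zeroEvalMap R M f g) = LinearMap.ker Q := by
    ext ⟨ψ, a, b⟩
    have hmem : (ψ, a, b) ∈ LinearMap.ker Q ↔ ψ = 0 ∧ a • g = b • f := by
      rw [LinearMap.mem_ker, ← sub_eq_zero (a := a • g), ← hq_apply]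
      exact Prod.ext_iff
    rw [hmem]
    constructor
    · rintro ⟨φ, h⟩
      obtain ⟨rfl, rfl, rfl⟩ : 0 = ψ ∧ φ f = a ∧ φ g = b := by
        simpa [zeroEvalMap] using h
      exact ⟨rfl, hM.dual_apply_smul_comm φ f g⟩
    · rintro ⟨rfl, hab⟩
      obtain ⟨φ, rfl, rfl⟩ := hM.exists_dual_apply_eq hfg hab
      exact ⟨φ, rfl⟩
  exact ⟨(Submodule.quotEquivOfEq _ _ hker).trans (Q.quotKerEquivOfSurjective hQ)⟩
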